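/- arXiv:1511.08824 — 2 statements merged into one kernel-verified Lean document; each statement's English description precedes it below -/
import Mathlib

section
/- Let ε > 0 and let η, v : ℝ × ℝ → ℝ (time × space) be C^∞ functions with 1 + ε·η(t,x) > 0 for all (t,x), satisfying ∂_t η + ∂_x v = 0 and ∂_t v + (1+εη)∂_x η − ε(1+εη)∂_x³η + ε ∂_x( v²/(1+εη) ) = 0 for all (t,x). Then for all (t,x): (1/(1+εη))·∂_t²v − ∂_x²v + ε ∂_x⁴v + (2εv/(1+εη))·∂_x( ∂_t v/(1+εη) ) = g, where g = −(ε ∂_tη/(1+εη))·(∂_xη − ε ∂_x³η) − 2ε (∂_xv)(∂_tv)/(1+εη)² + (ε²/(1+εη))·∂_x( v²·∂_tη/(1+εη)² ). -/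
/-- Partial derivative in the first (time) variable of `f : ℝ → ℝ → ℝ`. -/
noncomputable def dt1 (f : ℝ → ℝ → ℝ) : ℝ → ℝ → ℝ := fun t x => deriv (fun s => f s x) t

/-- Partial derivative in the second (space) variable of `f : ℝ → ℝ → ℝ`. -/
noncomputable def dx1 (f : ℝ → ℝ → ℝ) : ℝ → ℝ → ℝ := fun t x => deriv (fun y => f t y) x

/-!
Write `h = 1 + εη`, so that the second equation reads `v_t + h (η_x - ε η_xxx) + ε (v²/h)_x = 0`.
Differentiate it in time. By `η_t = -v_x` and the symmetry of mixed partial derivatives,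
`(η_x - ε η_xxx)_t = -v_xx + ε v_xxxx`; this is the principal part. The flux contributes
`(v²/h)_xt = (2v (v_t/h) - v² h_t/h²)_x`. Dividing by `h` gives the claim.

When `η` is merely `C⁴` and `v` merely `C²`, the term `v_xxxx` is still a genuine derivative,
because `v_x = -η_t` is `C³`.
-/

open Function

section PartialDerivatives

variable {f : ℝ → ℝ → ℝ} {t x : ℝ}

theorem hasDerivAt_dt1 (hf : DifferentiableAt ℝ (uncurry f) (t, x)) :
    HasDerivAt (fun s => f s x) (dt1 f t x) t :=
  (hf.comp t (f := fun s => (s, x)) (by fun_prop)).hasDerivAt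

theorem hasDerivAt_dx1 (hf : DifferentiableAt ℝ (uncurry f) (t, x)) :
    HasDerivAt (fun y => f t y) (dx1 f t x) x :=
  (hf.comp x (f := fun y => (t, y)) (by fun_prop)).hasDerivAt

theorem dt1_eq_fderiv_apply (hf : DifferentiableAt ℝ (uncurry f) (t, x)) :
    dt1 f t x = fderiv ℝ (uncurry f) (t, x) (1, 0) :=
  HasDerivAt.deriv <| hf.hasFDerivAt.comp_hasDerivAt t (f := fun s => (s, x)) <|
    (hasDerivAt_id t).prodMk (hasDerivAt_const t x)

theorem dx1_eq_fderiv_apply (hf : DifferentiableAt ℝ (uncurry f) (t, x)) :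
    dx1 f t x = fderiv ℝ (uncurry f) (t, x) (0, 1) :=
  HasDerivAt.deriv <| hf.hasFDerivAt.comp_hasDerivAt x (f := fun y => (t, y)) <|
    (hasDerivAt_const x t).prodMk (hasDerivAt_id x)

theorem uncurry_dt1 (hf : Differentiable ℝ (uncurry f)) :
    uncurry (dt1 f) = fun p => fderiv ℝ (uncurry f) p (1, 0) :=
  funext fun p => dt1_eq_fderiv_apply (hf p)

theorem uncurry_dx1 (hf : Differentiable ℝ (uncurry f)) :
    uncurry (dx1 f) = fun p => fderiv ℝ (uncurry f) p (0, 1) :=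
  funext fun p => dx1_eq_fderiv_apply (hf p)

theorem contDiff_dt1 {n : WithTop ℕ∞} (hf : ContDiff ℝ (n + 1) (uncurry f)) :
    ContDiff ℝ n (uncurry (dt1 f)) := by
  rw [uncurry_dt1 (hf.differentiable (by simp))]
  exact (hf.fderiv_right le_rfl).clm_apply contDiff_const

theorem contDiff_dx1 {n : WithTop ℕ∞} (hf : ContDiff ℝ (n + 1) (uncurry f)) :
    ContDiff ℝ n (uncurry (dx1 f)) := by
  rw [uncurry_dx1 (hf.differentiable (by simp))]
  exact (hf.fderiv_right le_rfl).clm_apply contDiff_const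

theorem contDiff_iterate_dx1 {n : WithTop ℕ∞} (k : ℕ) (hf : ContDiff ℝ (n + k) (uncurry f)) :
    ContDiff ℝ n (uncurry (dx1^[k] f)) := by
  induction k generalizing f with
  | zero => simpa using hf
  | succ k ih => exact ih (contDiff_dx1 (by simpa [add_assoc] using hf))

theorem dt1_dx1_comm (hf : ContDiff ℝ 2 (uncurry f)) : dt1 (dx1 f) = dx1 (dt1 f) := by
  funext t x
  have hf₁ : Differentiable ℝ (uncurry f) := hf.differentiable two_ne_zero
  have hf₂ : Differentiable ℝ (fderiv ℝ (uncurry f)) :=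
    (hf.fderiv_right (m := 1) le_rfl).differentiable one_ne_zero
  have hdt : Differentiable ℝ (uncurry (dt1 f)) :=
    (contDiff_dt1 (n := 1) hf).differentiable one_ne_zero
  have hdx : Differentiable ℝ (uncurry (dx1 f)) :=
    (contDiff_dx1 (n := 1) hf).differentiable one_ne_zero
  have symm : IsSymmSndFDerivAt ℝ (uncurry f) (t, x) := hf.contDiffAt.isSymmSndFDerivAt (by simp)
  rw [dt1_eq_fderiv_apply (hdx _), dx1_eq_fderiv_apply (hdt _), uncurry_dx1 hf₁, uncurry_dt1 hf₁,
    fderiv_clm_apply (hf₂ _) (by fun_prop), fderiv_clm_apply (hf₂ _) (by fun_prop)]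
  simpa using symm.eq (1, 0) (0, 1)

theorem dt1_iterate_dx1_comm (k : ℕ) (hf : ContDiff ℝ (k + 1) (uncurry f)) :
    dt1 (dx1^[k] f) = dx1^[k] (dt1 f) := by
  induction k generalizing f with
  | zero => rfl
  | succ k ih =>
    have hf₂ : ContDiff ℝ 2 (uncurry f) := hf.of_le (by norm_cast; lia)
    rw [iterate_succ_apply, iterate_succ_apply, ih (contDiff_dx1 (by exact_mod_cast hf)),
      dt1_dx1_comm hf₂]

theorem dx1_const_mul (c : ℝ) (f : ℝ → ℝ → ℝ) (t x : ℝ) :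
    dx1 (fun t x => c * f t x) t x = c * dx1 f t x :=
  deriv_const_mul_field c

theorem dt1_const_mul (c : ℝ) (f : ℝ → ℝ → ℝ) (t x : ℝ) :
    dt1 (fun t x => c * f t x) t x = c * dt1 f t x :=
  deriv_const_mul_field c

theorem dt1_const_add (c : ℝ) (f : ℝ → ℝ → ℝ) (t x : ℝ) :
    dt1 (fun t x => c + f t x) t x = dt1 f t x :=
  deriv_const_add c

theorem dx1_neg (f : ℝ → ℝ → ℝ) : dx1 (-f) = -dx1 f := by
  funext t x
  exact deriv.fun_neg

theorem iterate_dx1_neg (k : ℕ) (f : ℝ → ℝ → ℝ) : dx1^[k] (-f) = -dx1^[k] f :=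
  (show Function.Commute dx1 Neg.neg from dx1_neg).iterate_left k f

end PartialDerivatives

theorem hasDerivAt_iterate_dx1_of_conservation {η v : ℝ → ℝ → ℝ} (k : ℕ)
    (hη : ContDiff ℝ (k + 1) (uncurry η)) (hcons : ∀ t x, dt1 η t x + dx1 v t x = 0) (t x : ℝ) :
    HasDerivAt (fun s => dx1^[k] η s x) (-dx1^[k + 1] v t x) t := by
  have dt1_eq : dt1 η = -dx1 v := by
    funext t x
    exact eq_neg_of_add_eq_zero_left (hcons t x)
  have dt1_iterate_eq : dt1 (dx1^[k] η) = -dx1^[k + 1] v := by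
    rw [dt1_iterate_dx1_comm k hη, dt1_eq, iterate_dx1_neg, iterate_succ_apply]
  have diff : Differentiable ℝ (uncurry (dx1^[k] η)) :=
    (contDiff_iterate_dx1 (n := 1) k (by rwa [add_comm])).differentiable one_ne_zero
  simpa [dt1_iterate_eq] using hasDerivAt_dt1 (diff (t, x))

theorem dt1_dt1_eq_of_momentum {ε : ℝ} {η v h S : ℝ → ℝ → ℝ} (hη : ContDiff ℝ 4 (uncurry η))
    (hv_t : Differentiable ℝ (uncurry (dt1 v))) (hh : Differentiable ℝ (uncurry h))
    (hS : Differentiable ℝ (uncurry S)) (hcons : ∀ t x, dt1 η t x + dx1 v t x = 0)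
    (hmom : ∀ t x, dt1 v t x + h t x * (dx1 η t x - ε * dx1^[3] η t x) + S t x = 0) (t x : ℝ) :
    dt1 (dt1 v) t x = h t x * (dx1^[2] v t x - ε * dx1^[4] v t x)
      - dt1 h t x * (dx1 η t x - ε * dx1^[3] η t x) - dt1 S t x := by
  have hη_x : HasDerivAt (fun s => dx1 η s x) (-dx1^[2] v t x) t :=
    hasDerivAt_iterate_dx1_of_conservation 1 (hη.of_le (by norm_num)) hcons t x
  have hη_xxx : HasDerivAt (fun s => dx1^[3] η s x) (-dx1^[4] v t x) t :=
    hasDerivAt_iterate_dx1_of_conservation 3 (hη.of_le (by norm_num)) hcons t x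
  have hmom_t := ((hasDerivAt_dt1 (hv_t (t, x))).fun_add
    ((hasDerivAt_dt1 (hh (t, x))).fun_mul (hη_x.fun_sub (hη_xxx.const_mul ε)))).fun_add
    (hasDerivAt_dt1 (hS (t, x)))
  simp only [hmom] at hmom_t
  linear_combination hmom_t.unique (hasDerivAt_const t 0)

section Flux

variable {v h : ℝ → ℝ → ℝ}

theorem dt1_sq_div {t x : ℝ} (hv : DifferentiableAt ℝ (uncurry v) (t, x))
    (hh : DifferentiableAt ℝ (uncurry h) (t, x)) (h_ne : h t x ≠ 0) :
    dt1 (fun t x => v t x ^ 2 / h t x) t x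
      = 2 * (v t x * (dt1 v t x / h t x)) - v t x ^ 2 * dt1 h t x / h t x ^ 2 := by
  refine (((hasDerivAt_dt1 hv).fun_pow 2).fun_div (hasDerivAt_dt1 hh) h_ne).deriv.trans ?_
  field_simp
  ring

theorem dt1_dx1_sq_div (hv : ContDiff ℝ 2 (uncurry v)) (hh : ContDiff ℝ 2 (uncurry h))
    (h_ne : ∀ t x, h t x ≠ 0) (t x : ℝ) :
    dt1 (dx1 fun t x => v t x ^ 2 / h t x) t x
      = 2 * (dx1 v t x * (dt1 v t x / h t x) + v t x * dx1 (fun t x => dt1 v t x / h t x) t x)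
        - dx1 (fun t x => v t x ^ 2 * dt1 h t x / h t x ^ 2) t x := by
  have hv₁ : ContDiff ℝ 1 (uncurry v) := hv.of_le (by norm_num)
  have hh₁ : ContDiff ℝ 1 (uncurry h) := hh.of_le (by norm_num)
  have hflux : ContDiff ℝ 2 (uncurry fun t x => v t x ^ 2 / h t x) :=
    (hv.pow 2).div hh fun p => h_ne p.1 p.2
  have hacc : ContDiff ℝ 1 (uncurry fun t x => dt1 v t x / h t x) :=
    (contDiff_dt1 hv).div hh₁ fun p => h_ne p.1 p.2
  have hrem : ContDiff ℝ 1 (uncurry fun t x => v t x ^ 2 * dt1 h t x / h t x ^ 2) :=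
    ((hv₁.pow 2).mul (contDiff_dt1 hh)).div (hh₁.pow 2) fun p => pow_ne_zero 2 (h_ne p.1 p.2)
  have dt1_flux : dt1 (fun t x => v t x ^ 2 / h t x) = fun t x =>
      2 * (v t x * (dt1 v t x / h t x)) - v t x ^ 2 * dt1 h t x / h t x ^ 2 := by
    funext t x
    exact dt1_sq_div (hv₁.differentiable one_ne_zero _) (hh₁.differentiable one_ne_zero _)
      (h_ne t x)
  rw [dt1_dx1_comm hflux, dt1_flux]
  exact ((((hasDerivAt_dx1 (hv₁.differentiable one_ne_zero _)).fun_mul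
    (hasDerivAt_dx1 (hacc.differentiable one_ne_zero _))).const_mul 2).fun_sub
    (hasDerivAt_dx1 (hrem.differentiable one_ne_zero _))).deriv

end Flux

theorem quasilinear_v_1d_general (ε : ℝ) (η v : ℝ → ℝ → ℝ)
    (hη : ContDiff ℝ 4 (uncurry η)) (hv : ContDiff ℝ 2 (uncurry v))
    (hne : ∀ t x, 1 + ε * η t x ≠ 0)
    (heq1 : ∀ t x, dt1 η t x + dx1 v t x = 0)
    (heq2 : ∀ t x, dt1 v t x + (1 + ε * η t x) * dx1 η t x
      - ε * (1 + ε * η t x) * dx1 (dx1 (dx1 η)) t x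
      + ε * dx1 (fun t x => v t x ^ 2 / (1 + ε * η t x)) t x = 0) :
    ∀ t x,
      (1 / (1 + ε * η t x)) * dt1 (dt1 v) t x - dx1 (dx1 v) t x
        + ε * dx1 (dx1 (dx1 (dx1 v))) t x
        + (2 * ε * v t x / (1 + ε * η t x)) *
            dx1 (fun t x => dt1 v t x / (1 + ε * η t x)) t x
      = -(ε * dt1 η t x / (1 + ε * η t x)) * (dx1 η t x - ε * dx1 (dx1 (dx1 η)) t x)
        - 2 * ε * dx1 v t x * dt1 v t x / (1 + ε * η t x) ^ 2
        + ε ^ 2 / (1 + ε * η t x) *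
            dx1 (fun t x => v t x ^ 2 * dt1 η t x / (1 + ε * η t x) ^ 2) t x := by
  intro t x
  have hh : ContDiff ℝ 2 (uncurry fun t x => 1 + ε * η t x) :=
    contDiff_const.add (contDiff_const.mul (hη.of_le (by norm_num)))
  have hflux : ContDiff ℝ 2 (uncurry fun t x => v t x ^ 2 / (1 + ε * η t x)) :=
    (hv.pow 2).div hh fun p => hne p.1 p.2
  have hv_t : Differentiable ℝ (uncurry (dt1 v)) :=
    (contDiff_dt1 (n := 1) hv).differentiable one_ne_zero
  have hflux_x : Differentiable ℝ
      (uncurry fun t x => ε * dx1 (fun t x => v t x ^ 2 / (1 + ε * η t x)) t x) :=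
    ((contDiff_dx1 (n := 1) hflux).differentiable one_ne_zero).const_mul ε
  have v_tt := dt1_dt1_eq_of_momentum (ε := ε) hη hv_t (hh.differentiable two_ne_zero) hflux_x heq1
    (fun t x => by simp only [iterate_succ_apply, iterate_zero_apply]; linear_combination heq2 t x)
    t x
  have remainder : dx1 (fun t x => v t x ^ 2 * (ε * dt1 η t x) / (1 + ε * η t x) ^ 2) t x
      = ε * dx1 (fun t x => v t x ^ 2 * dt1 η t x / (1 + ε * η t x) ^ 2) t x := by
    rw [← dx1_const_mul]
    congr! 3
    ring
  simp only [iterate_succ_apply, iterate_zero_apply, dt1_dx1_sq_div hv hh hne,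
    dt1_const_add, dt1_const_mul, remainder] at v_tt
  have h_ne := hne t x
  rw [v_tt]
  field_simp
  ring

/-- The quasilinearized `v`-equation (Step 2 of the proof of Theorem 4.6): for smooth
solutions of the reduced system `η_t + v_x = 0`,
`v_t + (1+εη)η_x - ε(1+εη)η_{xxx} + ε(v²/(1+εη))_x = 0` with `1+εη > 0`, one has
`(1/(1+εη)) v_{tt} - v_{xx} + ε v_{xxxx} + (2εv/(1+εη)) ∂_x(v_t/(1+εη)) = g`. -/
theorem quasilinear_v_1d (ε : ℝ) (hε : 0 < ε) (η v : ℝ → ℝ → ℝ)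
    (hη : ContDiff ℝ (⊤ : ℕ∞) fun p : ℝ × ℝ => η p.1 p.2)
    (hv : ContDiff ℝ (⊤ : ℕ∞) fun p : ℝ × ℝ => v p.1 p.2)
    (hpos : ∀ t x, 0 < 1 + ε * η t x)
    (heq1 : ∀ t x, dt1 η t x + dx1 v t x = 0)
    (heq2 : ∀ t x, dt1 v t x + (1 + ε * η t x) * dx1 η t x
      - ε * (1 + ε * η t x) * dx1 (dx1 (dx1 η)) t x
      + ε * dx1 (fun t x => v t x ^ 2 / (1 + ε * η t x)) t x = 0) :
    ∀ t x,
      (1 / (1 + ε * η t x)) * dt1 (dt1 v) t x - dx1 (dx1 v) t x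
        + ε * dx1 (dx1 (dx1 (dx1 v))) t x
        + (2 * ε * v t x / (1 + ε * η t x)) *
            dx1 (fun t x => dt1 v t x / (1 + ε * η t x)) t x
      = -(ε * dt1 η t x / (1 + ε * η t x)) * (dx1 η t x - ε * dx1 (dx1 (dx1 η)) t x)
        - 2 * ε * dx1 v t x * dt1 v t x / (1 + ε * η t x) ^ 2
        + ε ^ 2 / (1 + ε * η t x) *
            dx1 (fun t x => v t x ^ 2 * dt1 η t x / (1 + ε * η t x) ^ 2) t x := by
  exact quasilinear_v_1d_general ε η v (contDiff_infty.1 hη 4) (contDiff_infty.1 hv 2)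
    (fun t x => (hpos t x).ne') heq1 heq2
end

section
/- Let ε > 0 and let η : ℝ × ℝ² → ℝ, v = (v₁,v₂) : ℝ × ℝ² → ℝ² be C^∞ functions with 1 + ε·η(t,x) > 0 for all (t,x), satisfying ∂_t η + ∇·v = 0 and, for i=1,2, ∂_t v_i + (1+εη)∂_i η − ε(1+εη)∂_i Δη + ε Σ_j ∂_j( v_i v_j/(1+εη) ) = 0. Then for all (t,x): ∂_t²η − ∇·((1+εη)∇η) + ε ∇·((1+εη)∇Δη) + (2ε/(1+εη))·v·∇(∂_tη) = f, where f = ε(∇·v)²/(1+εη) + 2ε ( v·∇(1/(1+εη)) )·(∇·v) + ε v·∇( v·∇(1/(1+εη)) ) + ε Σ_{i,j=1,2} ∂_j( v_i/(1+εη) )·∂_i v_j. -/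
/-- Time derivative of `f : ℝ → ℝ → ℝ → ℝ` (time, then two space variables). -/
noncomputable def dt2 (f : ℝ → ℝ → ℝ → ℝ) : ℝ → ℝ → ℝ → ℝ :=
  fun t x y => deriv (fun s => f s x y) t

/-- First space partial derivative. -/
noncomputable def dx2 (f : ℝ → ℝ → ℝ → ℝ) : ℝ → ℝ → ℝ → ℝ :=
  fun t x y => deriv (fun z => f t z y) x

/-- Second space partial derivative. -/
noncomputable def dy2 (f : ℝ → ℝ → ℝ → ℝ) : ℝ → ℝ → ℝ → ℝ :=
  fun t x y => deriv (fun z => f t x z) y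

/-- Spatial Laplacian. -/
noncomputable def lap2 (f : ℝ → ℝ → ℝ → ℝ) : ℝ → ℝ → ℝ → ℝ :=
  fun t x y => dx2 (dx2 f) t x y + dy2 (dy2 f) t x y


/-!
The identity is differential algebra. Smooth functions form a commutative algebra on which the
partial derivatives act as commuting derivations. Differentiating the mass equation in time and
inserting the divergence of the momentum equation expresses `η_tt` through the terms linear in
`∇η` and `∇Δη` and the double divergence of the flux `u ⊗ v`, where `u = v / (1 + εη)`, and
`∇·∇·(u ⊗ v) = (∇·u)(∇·v) + u·∇(∇·v) + v·∇(∇·u) + ∑ᵢⱼ ∂ⱼuᵢ ∂ᵢvⱼ`.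
Expanding `∇·u = (∇·v) / (1 + εη) + v·∇(1 / (1 + εη))`, the only second derivatives of `v` that
survive are `2 u·∇(∇·v) = -2 u·∇η_t`; the remaining terms make up `f`.
-/

section CommutingDerivations

variable {R A ι : Type*} [CommRing R] [CommRing A] [Algebra R A] [Fintype ι]

/-- The divergence `∇·u = ∑ᵢ ∂ᵢuᵢ` of a vector field with components in an algebra `A`, where the
family `D` of derivations of `A` plays the role of the partial derivatives. -/
def divergence (D : ι → Derivation R A A) (u : ι → A) : A :=
  ∑ i, D i (u i)

/-- The derivation `v·∇ = ∑ᵢ vᵢ ∂ᵢ` along a vector field `v`, where the family `D` of derivations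
of `A` plays the role of the partial derivatives. -/
def advection (D : ι → Derivation R A A) (v : ι → A) : Derivation R A A :=
  ∑ i, v i • D i

variable (D : ι → Derivation R A A)

theorem advection_apply (v : ι → A) (a : A) : advection D v a = ∑ i, v i * D i a := by
  simp only [advection, ← Derivation.coeFnAddMonoidHom_apply, map_sum, Finset.sum_apply]
  rfl

theorem advection_smul (a : A) (v : ι → A) : advection D (a • v) = a • advection D v := by
  simp [advection, Finset.smul_sum, smul_smul]

theorem divergence_add (u v : ι → A) :
    divergence D (u + v) = divergence D u + divergence D v := by
  simp [divergence, Finset.sum_add_distrib]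

theorem divergence_smul (a : A) (v : ι → A) :
    divergence D (a • v) = a * divergence D v + advection D v a := by
  simp [divergence, advection_apply, Finset.sum_add_distrib, Finset.mul_sum]

theorem divergence_const_smul (r : R) (v : ι → A) :
    divergence D (r • v) = r • divergence D v := by
  simp [divergence, Finset.smul_sum]

theorem derivation_divergence (T : Derivation R A A) (hT : ∀ i a, T (D i a) = D i (T a))
    (v : ι → A) : T (divergence D v) = divergence D (fun i => T (v i)) := by
  simp [divergence, hT]

theorem divergence_advection (hD : ∀ i j a, D i (D j a) = D j (D i a)) (u v : ι → A) :
    divergence D (fun i => advection D v (u i)) =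
      advection D v (divergence D u) + ∑ i, ∑ j, D j (u i) * D i (v j) := by
  have product_rule (i j : ι) :
      D i (v j * D j (u i)) = v j * D j (D i (u i)) + D j (u i) * D i (v j) := by
    rw [Derivation.leibniz, smul_eq_mul, smul_eq_mul, hD i j]
  simp only [divergence, advection_apply, map_sum, product_rule, Finset.sum_add_distrib]

theorem divergence_divergence_tensor (hD : ∀ i j a, D i (D j a) = D j (D i a)) (u v : ι → A) :
    divergence D (fun i => divergence D (u i • v)) =
      divergence D u * divergence D v + advection D u (divergence D v)
        + advection D v (divergence D u) + ∑ i, ∑ j, D j (u i) * D i (v j) := by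
  have inner_divergence : (fun i => divergence D (u i • v)) =
      divergence D v • u + fun i => advection D v (u i) := by
    funext i
    simp [divergence_smul, mul_comm]
  rw [inner_divergence, divergence_add, divergence_smul, divergence_advection D hD]
  ring

theorem divergence_divergence_smul_tensor_self (hD : ∀ i j a, D i (D j a) = D j (D i a))
    (w : A) (v : ι → A) :
    divergence D (fun i => divergence D ((w * v i) • v)) =
      2 * w * advection D v (divergence D v)
        + (w * divergence D v ^ 2 + 2 * advection D v w * divergence D v
          + advection D v (advection D v w) + ∑ i, ∑ j, D j (w * v i) * D i (v j)) := by
  have advection_divergence : advection D v (divergence D (w • v)) =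
      w * advection D v (divergence D v) + divergence D v * advection D v w
        + advection D v (advection D v w) := by
    rw [divergence_smul, map_add, Derivation.leibniz, smul_eq_mul, smul_eq_mul]
  refine (divergence_divergence_tensor D hD (w • v) v).trans ?_
  rw [advection_divergence, advection_smul, divergence_smul]
  simp only [Derivation.smul_apply, Pi.smul_apply, smul_eq_mul]
  ring

variable {D}

theorem second_derivation_of_balance_laws {T : Derivation R A A} {η : A} {v g : ι → A}
    (hT : ∀ i a, T (D i a) = D i (T a)) (mass : T η + divergence D v = 0)
    (momentum : ∀ i, T (v i) + g i = 0) :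
    T (T η) = divergence D g := by
  have hTv (i : ι) : T (v i) = -g i := eq_neg_of_add_eq_zero_left (momentum i)
  rw [eq_neg_of_add_eq_zero_left mass, map_neg, derivation_divergence D T hT]
  simp [divergence, hTv]

theorem quasilinear_equation_of_balance_laws {T : Derivation R A A} {η : A} {v g : ι → A}
    (hT : ∀ i a, T (D i a) = D i (T a))
    (hD : ∀ i j a, D i (D j a) = D j (D i a)) (ε : R) (w : A)
    (mass : T η + divergence D v = 0)
    (momentum : ∀ i, T (v i) + (g i + ε • divergence D ((w * v i) • v)) = 0) :
    T (T η) - divergence D g + (2 * ε) • (w * advection D v (T η)) =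
      ε • (w * divergence D v ^ 2 + 2 * advection D v w * divergence D v
        + advection D v (advection D v w) + ∑ i, ∑ j, D j (w * v i) * D i (v j)) := by
  have second_derivative : T (T η) =
      divergence D g + ε • divergence D (fun i => divergence D ((w * v i) • v)) := by
    rw [← divergence_const_smul, ← divergence_add]
    exact second_derivation_of_balance_laws hT mass momentum
  rw [second_derivative, divergence_divergence_smul_tensor_self D hD,
    eq_neg_of_add_eq_zero_left mass, map_neg]
  simp only [Algebra.smul_def, map_mul, map_ofNat]
  ring

-- `h`, `w`, `l` take the places of `1 + εη`, `1 / (1 + εη)` and `Δη`.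
theorem quasilinear_eta_2d_general {D₁ D₂ T : Derivation R A A}
    (hT₁ : ∀ a, T (D₁ a) = D₁ (T a)) (hT₂ : ∀ a, T (D₂ a) = D₂ (T a))
    (hD : ∀ a, D₁ (D₂ a) = D₂ (D₁ a)) (ε : R) (h w l : A) {η v₁ v₂ : A}
    (mass : T η + (D₁ v₁ + D₂ v₂) = 0)
    (momentum₁ : T v₁ + h * D₁ η - ε • h * D₁ l
      + ε • (D₁ (v₁ * v₁ * w) + D₂ (v₁ * v₂ * w)) = 0)
    (momentum₂ : T v₂ + h * D₂ η - ε • h * D₂ l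
      + ε • (D₁ (v₂ * v₁ * w) + D₂ (v₂ * v₂ * w)) = 0) :
    T (T η) - (D₁ (h * D₁ η) + D₂ (h * D₂ η)) + ε • (D₁ (h * D₁ l) + D₂ (h * D₂ l))
        + (2 * ε) • w * (v₁ * D₁ (T η) + v₂ * D₂ (T η)) =
      ε • (D₁ v₁ + D₂ v₂) ^ 2 * w
        + (2 * ε) • (v₁ * D₁ w + v₂ * D₂ w) * (D₁ v₁ + D₂ v₂)
        + ε • (v₁ * D₁ (v₁ * D₁ w + v₂ * D₂ w) + v₂ * D₂ (v₁ * D₁ w + v₂ * D₂ w))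
        + ε • (D₁ (v₁ * w) * D₁ v₁ + D₂ (v₁ * w) * D₁ v₂
          + D₁ (v₂ * w) * D₂ v₁ + D₂ (v₂ * w) * D₂ v₂) := by
  have divergence_eq (u₁ u₂ : A) : divergence ![D₁, D₂] ![u₁, u₂] = D₁ u₁ + D₂ u₂ := by
    simp [divergence]
  have advection_eq (a : A) : advection ![D₁, D₂] ![v₁, v₂] a = v₁ * D₁ a + v₂ * D₂ a := by
    simp [advection_apply]
  have flux_eq (u : A) : divergence ![D₁, D₂] ((w * u) • ![v₁, v₂]) =
      D₁ (u * v₁ * w) + D₂ (u * v₂ * w) := by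
    rw [Matrix.smul_vec2, divergence_eq, smul_eq_mul, smul_eq_mul, mul_rotate w, mul_rotate w]
  have momentum : ∀ i, T (![v₁, v₂] i)
      + (![h * D₁ η - ε • h * D₁ l, h * D₂ η - ε • h * D₂ l] i
        + ε • divergence ![D₁, D₂] ((w * ![v₁, v₂] i) • ![v₁, v₂])) = 0 := by
    simp only [Fin.forall_fin_two, Matrix.cons_val_zero, Matrix.cons_val_one, flux_eq,
      ← add_assoc, ← add_sub_assoc]
    exact ⟨momentum₁, momentum₂⟩
  have key := quasilinear_equation_of_balance_laws
    (Fin.forall_fin_two.mpr ⟨hT₁, hT₂⟩) (by simp [Fin.forall_fin_two, hD]) ε w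
    ((divergence_eq v₁ v₂).symm ▸ mass) momentum
  simp only [divergence_eq, advection_eq, Fin.sum_univ_two, Matrix.cons_val_zero,
    Matrix.cons_val_one, map_sub, smul_mul_assoc, Derivation.map_smul, mul_comm w] at key
  simp only [Algebra.smul_def, map_mul, map_ofNat] at key ⊢
  linear_combination key

end CommutingDerivations

section SmoothFunctions

variable (E : Type*) [NormedAddCommGroup E] [NormedSpace ℝ E]

/-- The algebra of `C^∞` real-valued functions on `E`, on which directional derivatives act as
derivations. -/
def smoothFunctions : Subalgebra ℝ (E → ℝ) where
  carrier := {f | ContDiff ℝ (⊤ : ℕ∞) f}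
  add_mem' {_ _} (hf : ContDiff ℝ (⊤ : ℕ∞) _) (hg : ContDiff ℝ (⊤ : ℕ∞) _) := hf.add hg
  mul_mem' {_ _} (hf : ContDiff ℝ (⊤ : ℕ∞) _) (hg : ContDiff ℝ (⊤ : ℕ∞) _) := hf.mul hg
  algebraMap_mem' c := show ContDiff ℝ (⊤ : ℕ∞) fun _ : E => c from contDiff_const

variable {E}

theorem contDiff_coe_smoothFunctions (f : smoothFunctions E) :
    ContDiff ℝ (⊤ : ℕ∞) (f : E → ℝ) :=
  f.2

theorem differentiableAt_coe_smoothFunctions (f : smoothFunctions E) (p : E) :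
    DifferentiableAt ℝ (f : E → ℝ) p :=
  (contDiff_coe_smoothFunctions f).differentiable (by simp) p

theorem lineDifferentiableAt_coe_smoothFunctions (f : smoothFunctions E) (p e : E) :
    LineDifferentiableAt ℝ (f : E → ℝ) p e :=
  (differentiableAt_coe_smoothFunctions f p).lineDifferentiableAt

theorem contDiff_fderiv_smoothFunctions (f : smoothFunctions E) :
    ContDiff ℝ (⊤ : ℕ∞) (fderiv ℝ (f : E → ℝ)) :=
  (contDiff_coe_smoothFunctions f).fderiv_right le_rfl

theorem lineDeriv_coe_smoothFunctions (f : smoothFunctions E) (e : E) :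
    (fun p => lineDeriv ℝ f p e) = fun p => fderiv ℝ (f : E → ℝ) p e :=
  funext fun p => (differentiableAt_coe_smoothFunctions f p).lineDeriv_eq_fderiv

theorem lineDeriv_mem_smoothFunctions (f : smoothFunctions E) (e : E) :
    (fun p => lineDeriv ℝ f p e) ∈ smoothFunctions E := by
  rw [lineDeriv_coe_smoothFunctions]
  exact (contDiff_fderiv_smoothFunctions f).clm_apply contDiff_const

/-- The directional derivative along `e`, as a derivation of the algebra of smooth functions. It is
defined by `lineDeriv`, which computes the partial derivatives `dt2`, `dx2`, `dy2` of arbitrary, not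
necessarily differentiable, functions. -/
noncomputable def directionalDerivation (e : E) :
    Derivation ℝ (smoothFunctions E) (smoothFunctions E) :=
  Derivation.mk'
    { toFun f := ⟨fun p => lineDeriv ℝ (f : E → ℝ) p e, lineDeriv_mem_smoothFunctions f e⟩
      map_add' f g := Subtype.ext <| funext fun p =>
        deriv_fun_add (lineDifferentiableAt_coe_smoothFunctions f p e)
          (lineDifferentiableAt_coe_smoothFunctions g p e)
      map_smul' c f := Subtype.ext <| funext fun p =>
        deriv_fun_const_smul c (lineDifferentiableAt_coe_smoothFunctions f p e) }
    fun f g => by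
      ext p
      have product_rule := deriv_fun_mul (lineDifferentiableAt_coe_smoothFunctions f p e)
        (lineDifferentiableAt_coe_smoothFunctions g p e)
      rw [zero_smul, add_zero, add_comm, mul_comm (deriv _ _)] at product_rule
      exact product_rule

theorem coe_directionalDerivation (e : E) (f : smoothFunctions E) :
    (directionalDerivation e f : E → ℝ) = fun p => fderiv ℝ (f : E → ℝ) p e :=
  lineDeriv_coe_smoothFunctions f e

theorem directionalDerivation_comm (e e' : E) (f : smoothFunctions E) :
    directionalDerivation e (directionalDerivation e' f) =
      directionalDerivation e' (directionalDerivation e f) := by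
  ext p
  have hf : DifferentiableAt ℝ (fderiv ℝ (f : E → ℝ)) p :=
    (contDiff_fderiv_smoothFunctions f).differentiable (by simp) p
  have symmetric : IsSymmSndFDerivAt ℝ (f : E → ℝ) p :=
    (contDiff_coe_smoothFunctions f).contDiffAt.isSymmSndFDerivAt (by simpa using ENat.LEInfty.out)
  simp only [coe_directionalDerivation]
  rw [fderiv_clm_apply hf (differentiableAt_const _),
    fderiv_clm_apply hf (differentiableAt_const _)]
  simpa using symmetric e e'

end SmoothFunctions

theorem dt2_eq_lineDeriv (f : ℝ → ℝ → ℝ → ℝ) : dt2 f = fun t x y =>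
    lineDeriv ℝ (fun p : ℝ × ℝ × ℝ => f p.1 p.2.1 p.2.2) (t, x, y) (1, 0, 0) := by
  funext t x y
  simp [dt2, lineDeriv, deriv_comp_const_add (fun s => f s x y)]

theorem dx2_eq_lineDeriv (f : ℝ → ℝ → ℝ → ℝ) : dx2 f = fun t x y =>
    lineDeriv ℝ (fun p : ℝ × ℝ × ℝ => f p.1 p.2.1 p.2.2) (t, x, y) (0, 1, 0) := by
  funext t x y
  simp [dx2, lineDeriv, deriv_comp_const_add (fun s => f t s y)]

theorem dy2_eq_lineDeriv (f : ℝ → ℝ → ℝ → ℝ) : dy2 f = fun t x y =>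
    lineDeriv ℝ (fun p : ℝ × ℝ × ℝ => f p.1 p.2.1 p.2.2) (t, x, y) (0, 0, 1) := by
  funext t x y
  simp [dy2, lineDeriv, deriv_comp_const_add (fun s => f t x s)]

/-- The 2D quasilinearized `η`-equation (Step 2 of the proof of Theorem 4.7): for smooth
solutions of the reduced system with `1+εη > 0`,
`η_{tt} - ∇·((1+εη)∇η) + ε ∇·((1+εη)∇Δη) + (2ε/(1+εη)) v·∇(η_t) = f`. -/
theorem quasilinear_eta_2d (ε : ℝ) (hε : 0 < ε) (η v₁ v₂ : ℝ → ℝ → ℝ → ℝ)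
    (hη : ContDiff ℝ (⊤ : ℕ∞) fun p : ℝ × ℝ × ℝ => η p.1 p.2.1 p.2.2)
    (hv₁ : ContDiff ℝ (⊤ : ℕ∞) fun p : ℝ × ℝ × ℝ => v₁ p.1 p.2.1 p.2.2)
    (hv₂ : ContDiff ℝ (⊤ : ℕ∞) fun p : ℝ × ℝ × ℝ => v₂ p.1 p.2.1 p.2.2)
    (hpos : ∀ t x y, 0 < 1 + ε * η t x y)
    (heq1 : ∀ t x y, dt2 η t x y + (dx2 v₁ t x y + dy2 v₂ t x y) = 0)
    (heq2x : ∀ t x y, dt2 v₁ t x y + (1 + ε * η t x y) * dx2 η t x y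
      - ε * (1 + ε * η t x y) * dx2 (lap2 η) t x y
      + ε * (dx2 (fun t x y => v₁ t x y * v₁ t x y / (1 + ε * η t x y)) t x y
           + dy2 (fun t x y => v₁ t x y * v₂ t x y / (1 + ε * η t x y)) t x y) = 0)
    (heq2y : ∀ t x y, dt2 v₂ t x y + (1 + ε * η t x y) * dy2 η t x y
      - ε * (1 + ε * η t x y) * dy2 (lap2 η) t x y
      + ε * (dx2 (fun t x y => v₂ t x y * v₁ t x y / (1 + ε * η t x y)) t x y
           + dy2 (fun t x y => v₂ t x y * v₂ t x y / (1 + ε * η t x y)) t x y) = 0) :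
    ∀ t x y,
      dt2 (dt2 η) t x y
        - (dx2 (fun t x y => (1 + ε * η t x y) * dx2 η t x y) t x y
           + dy2 (fun t x y => (1 + ε * η t x y) * dy2 η t x y) t x y)
        + ε * (dx2 (fun t x y => (1 + ε * η t x y) * dx2 (lap2 η) t x y) t x y
             + dy2 (fun t x y => (1 + ε * η t x y) * dy2 (lap2 η) t x y) t x y)
        + (2 * ε / (1 + ε * η t x y)) *
            (v₁ t x y * dx2 (dt2 η) t x y + v₂ t x y * dy2 (dt2 η) t x y)
      = ε * (dx2 v₁ t x y + dy2 v₂ t x y) ^ 2 / (1 + ε * η t x y)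
        + 2 * ε * (v₁ t x y * dx2 (fun t x y => (1 + ε * η t x y)⁻¹) t x y
                 + v₂ t x y * dy2 (fun t x y => (1 + ε * η t x y)⁻¹) t x y)
            * (dx2 v₁ t x y + dy2 v₂ t x y)
        + ε * (v₁ t x y *
              dx2 (fun t x y => v₁ t x y * dx2 (fun t x y => (1 + ε * η t x y)⁻¹) t x y
                 + v₂ t x y * dy2 (fun t x y => (1 + ε * η t x y)⁻¹) t x y) t x y
             + v₂ t x y *
              dy2 (fun t x y => v₁ t x y * dx2 (fun t x y => (1 + ε * η t x y)⁻¹) t x y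
                 + v₂ t x y * dy2 (fun t x y => (1 + ε * η t x y)⁻¹) t x y) t x y)
        + ε * (dx2 (fun t x y => v₁ t x y / (1 + ε * η t x y)) t x y * dx2 v₁ t x y
             + dy2 (fun t x y => v₁ t x y / (1 + ε * η t x y)) t x y * dx2 v₂ t x y
             + dx2 (fun t x y => v₂ t x y / (1 + ε * η t x y)) t x y * dy2 v₁ t x y
             + dy2 (fun t x y => v₂ t x y / (1 + ε * η t x y)) t x y * dy2 v₂ t x y) := by
  let N : smoothFunctions (ℝ × ℝ × ℝ) := ⟨_, hη⟩
  let V₁ : smoothFunctions (ℝ × ℝ × ℝ) := ⟨_, hv₁⟩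
  let V₂ : smoothFunctions (ℝ × ℝ × ℝ) := ⟨_, hv₂⟩
  let H : smoothFunctions (ℝ × ℝ × ℝ) := 1 + ε • N
  let W : smoothFunctions (ℝ × ℝ × ℝ) := ⟨fun p => (1 + ε * η p.1 p.2.1 p.2.2)⁻¹,
    (contDiff_coe_smoothFunctions H).inv fun p => (hpos p.1 p.2.1 p.2.2).ne'⟩
  let T := directionalDerivation ((1, 0, 0) : ℝ × ℝ × ℝ)
  let D₁ := directionalDerivation ((0, 1, 0) : ℝ × ℝ × ℝ)
  let D₂ := directionalDerivation ((0, 0, 1) : ℝ × ℝ × ℝ)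
  -- In terms of line derivatives, each equation is definitionally the pointwise form of an
  -- equation in the algebra of smooth functions.
  simp only [lap2, dt2_eq_lineDeriv, dx2_eq_lineDeriv, dy2_eq_lineDeriv, div_eq_mul_inv]
    at heq1 heq2x heq2y ⊢
  have key := quasilinear_eta_2d_general
    (T := T) (D₁ := D₁) (D₂ := D₂) (η := N) (v₁ := V₁) (v₂ := V₂)
    (directionalDerivation_comm _ _) (directionalDerivation_comm _ _)
    (directionalDerivation_comm _ _) ε H W (D₁ (D₁ N) + D₂ (D₂ N))
    (Subtype.ext <| funext fun p => heq1 p.1 p.2.1 p.2.2)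
    (Subtype.ext <| funext fun p => heq2x p.1 p.2.1 p.2.2)
    (Subtype.ext <| funext fun p => heq2y p.1 p.2.1 p.2.2)
  exact fun t x y => congrFun (congrArg Subtype.val key) (t, x, y)
end
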